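/- Let ℓ ∈ ℤ, let a, b be positive integers, let m(1), …, m(a) and n(1), …, n(b) be positive integers, and set f(x) = x^{ℓ/2} · ∏_{i=1}^{a}(x^{m(i)} − 1) / ∏_{j=1}^{b}(x^{n(j)} − 1) for x > 1, |m| = Σᵢ m(i), |n| = Σⱼ n(j). Then for all w, s ∈ ℂ with Re(w) > b and Re(s) > ℓ/2 + |m| − |n|: (1/Γ(w)) · ∫₀^∞ f(e^t)·e^{−st}·t^{w−1} dt = Σ_{I ⊆ {1,…,a}} (−1)^{a−|I|} · Σ_{k₁,…,k_b ≥ 0} (s − ℓ/2 + |n| − m(I) + Σ_{j=1}^{b} k_j·n(j))^{−w}, where m(I) = Σ_{i∈I} m(i) and |I| is the cardinality of I; the integral and all the multiple series converge absolutely. -/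

import Mathlib

open MeasureTheory Complex Finset

/-!
Expanding `∏ᵢ (e^{m(i)t} - 1)` over the subsets `I` turns `f(e^t) e^{-st}` into a signed sum of the
functions `e^{-z t} ∏ⱼ (1 - e^{-n(j)t})⁻¹` with `z = s - ℓ/2 + |n| - m(I)`. Each of these is a
multiple geometric series in the exponentials `e^{-pt}`, `p = z + Σⱼ kⱼ n(j)`, and the Mellin
transform of `e^{-pt}` at `w` is `Γ(w) p^{-w}`: for real `p` this is the Gamma integral, and both
sides are holomorphic in `Re p > 0`. Sum and integral may be interchanged because
`Σₖ (Re p)^{-Re w}` converges for `Re w > b`.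
-/

section ProductSeries

variable {ι : Type*} [hι : Fintype ι] {β : ι → Type*} {R : Type*} [NormedCommRing R]

lemma summable_norm_prod_pi {f : ∀ i, β i → R} (hf : ∀ i, Summable fun x => ‖f i x‖) :
    Summable fun k : ∀ i, β i => ‖∏ i, f i (k i)‖ := by
  revert β
  refine @(Fintype.induction_empty_option ?_ ?_ ?_ ι (h_fintype := hι))
  · intro ι κ _ e ih β f hf
    let := Fintype.ofEquiv κ e.symm
    rw [← (Equiv.piCongrLeft β e).summable_iff]
    refine (ih fun i => hf (e i)).congr fun k => ?_
    simp [← e.prod_comp, Equiv.piCongrLeft_apply_apply]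
  · intro β f _
    exact .of_finite
  · intro ι _ ih β f hf
    rw [← Equiv.piOptionEquivProd.symm.summable_iff]
    refine ((hf none).mul_norm (ih fun i => hf (some i))).congr fun k => ?_
    simp [Equiv.piOptionEquivProd]

lemma hasSum_prod_pi [CompleteSpace R] {f : ∀ i, β i → R}
    (hf : ∀ i, Summable fun x => ‖f i x‖) :
    HasSum (fun k : ∀ i, β i => ∏ i, f i (k i)) (∏ i, ∑' x, f i x) := by
  revert β
  refine @(Fintype.induction_empty_option ?_ ?_ ?_ ι (h_fintype := hι))
  · intro ι κ _ e ih β f hf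
    let := Fintype.ofEquiv κ e.symm
    rw [← (Equiv.piCongrLeft β e).hasSum_iff, ← e.prod_comp]
    refine (ih fun i => hf (e i)).congr_fun fun k => ?_
    simp [← e.prod_comp, Equiv.piCongrLeft_apply_apply]
  · intro β f _
    simp
  · intro ι _ ih β f hf
    have hsome := summable_norm_prod_pi fun i => hf (some i)
    rw [← Equiv.piOptionEquivProd.symm.hasSum_iff, Fintype.prod_option,
      ← (ih fun i => hf (some i)).tsum_eq, tsum_mul_tsum_of_summable_norm (hf none) hsome]
    refine (summable_mul_of_summable_norm (hf none) hsome).hasSum.congr_fun fun k => ?_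
    simp [Equiv.piOptionEquivProd]

end ProductSeries

lemma integrable_of_hasSum_of_summable_integral_norm {α ι E : Type*} [MeasurableSpace α]
    {μ : Measure α} [Countable ι] [NormedAddCommGroup E] {F : ι → α → E} {G : α → E}
    (hF : ∀ i, Integrable (F i) μ) (hsum : Summable fun i => ∫ x, ‖F i x‖ ∂μ)
    (hG : ∀ᵐ x ∂μ, HasSum (fun i => F i x) (G x)) : Integrable G μ := by
  refine ⟨aestronglyMeasurable_of_tendsto_ae Filter.atTop (fun s => ?_) hG, ?_⟩
  · exact aestronglyMeasurable_fun_sum s fun i _ => (hF i).1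
  calc ∫⁻ x, ‖G x‖ₑ ∂μ ≤ ∫⁻ x, ∑' i, ‖F i x‖ₑ ∂μ := by
        refine lintegral_mono_ae (hG.mono fun x hx => ?_)
        rw [← hx.tsum_eq]
        exact enorm_tsum_le_tsum_enorm
    _ = ∑' i, ∫⁻ x, ‖F i x‖ₑ ∂μ := lintegral_tsum fun i => (hF i).1.enorm
    _ = ∑' i, ENNReal.ofReal (∫ x, ‖F i x‖ ∂μ) := by
        simp only [ofReal_integral_norm_eq_lintegral_enorm (hF _)]
    _ < ⊤ := hsum.tsum_ofReal_lt_top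

lemma hasMellin_finset_sum {ι E : Type*} [NormedAddCommGroup E] [NormedSpace ℂ E] {s : Finset ι}
    {f : ι → ℝ → E} {M : ι → E} {w : ℂ} (h : ∀ i ∈ s, HasMellin (f i) w (M i)) :
    HasMellin (fun t => ∑ i ∈ s, f i t) w (∑ i ∈ s, M i) := by
  refine ⟨?_, ?_⟩
  · simpa only [MellinConvergent, smul_sum] using! integrable_finsetSum s fun i hi => (h i hi).1
  · simp only [mellin, smul_sum]
    rw [integral_finsetSum s fun i hi => (h i hi).1]
    exact sum_congr rfl fun i hi => (h i hi).2

lemma hasMellin_const_smul_of_hasMellin {E : Type*} [NormedAddCommGroup E] [NormedSpace ℂ E]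
    {R : Type*} [NormedRing R] [Module R E] [IsBoundedSMul R E] [SMulCommClass ℂ R E] {f : ℝ → E}
    {M : E} {w : ℂ} (h : HasMellin f w M) (c : R) :
    HasMellin (fun t => c • f t) w (c • M) :=
  h.2 ▸ hasMellin_const_smul h.1 c

section CexpMellin

variable {w z : ℂ}

lemma norm_cpow_smul_cexp_neg_mul (w z : ℂ) {t : ℝ} (ht : 0 < t) :
    ‖(t : ℂ) ^ (w - 1) • cexp (-(z * t))‖ = t ^ (w.re - 1) * Real.exp (-(z.re * t)) := by
  simp [norm_cpow_eq_rpow_re_of_pos ht, Complex.norm_exp]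

lemma mellinConvergent_cexp_neg_mul (hw : 0 < w.re) (hz : 0 < z.re) :
    MellinConvergent (fun t : ℝ => cexp (-(z * t))) w := by
  refine mellinConvergent_of_isBigO_rpow_exp (b := 0) hz
    (Continuous.continuousOn (by fun_prop) |>.locallyIntegrableOn measurableSet_Ioi) ?_ ?_ hw
  · refine .of_bound 1 (.of_forall fun t => ?_)
    simp [Complex.norm_exp]
  · simpa using (Continuous.tendsto (by fun_prop) 0).mono_left nhdsWithin_le_nhds |>.isBigO_one ℝ

lemma integral_norm_cpow_smul_cexp_neg_mul (hw : 0 < w.re) (hz : 0 < z.re) :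
    ∫ t in Set.Ioi (0 : ℝ), ‖(t : ℂ) ^ (w - 1) • cexp (-(z * t))‖ =
      Real.Gamma w.re * z.re ^ (-w.re) := by
  rw [setIntegral_congr_fun measurableSet_Ioi fun t ht => norm_cpow_smul_cexp_neg_mul w z ht,
    Real.integral_rpow_mul_exp_neg_mul_Ioi hw hz, one_div, Real.inv_rpow hz.le,
    Real.rpow_neg hz.le, mul_comm]

lemma hasDerivAt_mellin_cexp_neg_mul (hw : 0 < w.re) (hz : 0 < z.re) :
    HasDerivAt (fun z : ℂ => mellin (fun t : ℝ => cexp (-(z * t))) w)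
      (-mellin (fun t : ℝ => cexp (-(z * t))) (w + 1)) z := by
  have hw' : 0 < (w + 1).re := by simpa using by linarith
  have hz' : 0 < (↑(z.re / 2) : ℂ).re := by simpa using hz
  have hnhds : {x : ℂ | z.re / 2 < x.re} ∈ nhds z :=
    (isOpen_lt continuous_const continuous_re).mem_nhds (half_lt_self hz)
  have hconv : ∀ x ∈ {x : ℂ | z.re / 2 < x.re},
      MellinConvergent (fun t : ℝ => cexp (-(x * t))) w := fun x hx =>
    mellinConvergent_cexp_neg_mul hw ((half_pos hz).trans hx)
  simp only [mellin, ← integral_neg]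
  refine (hasDerivAt_integral_of_dominated_loc_of_deriv_le
    (F' := fun (x : ℂ) (t : ℝ) => -((t : ℂ) ^ (w + 1 - 1) • cexp (-(x * t)))) hnhds
    (Filter.eventually_of_mem hnhds fun x hx => (hconv x hx).aestronglyMeasurable)
    (mellinConvergent_cexp_neg_mul hw hz)
    (mellinConvergent_cexp_neg_mul hw' hz).aestronglyMeasurable.neg ?_
    (mellinConvergent_cexp_neg_mul hw' hz').norm ?_).2
  · filter_upwards [ae_restrict_mem measurableSet_Ioi] with t (ht : 0 < t) x hx
    rw [norm_neg, norm_cpow_smul_cexp_neg_mul _ _ ht, norm_cpow_smul_cexp_neg_mul _ _ ht, ofReal_re]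
    have : z.re / 2 ≤ x.re := le_of_lt hx
    gcongr
  · filter_upwards [ae_restrict_mem measurableSet_Ioi] with t (ht : 0 < t) x _
    have hpow : (t : ℂ) ^ (w + 1 - 1) = (t : ℂ) ^ (w - 1) * t := by
      rw [show w + 1 - 1 = w - 1 + 1 by ring, cpow_add _ _ (ofReal_ne_zero.2 ht.ne'), cpow_one]
    have hexp := (hasDerivAt_mul_const (x := x) (t : ℂ)).fun_neg.cexp.const_mul ((t : ℂ) ^ (w - 1))
    refine hexp.congr_deriv ?_
    rw [hpow, smul_eq_mul]
    ring

lemma eqOn_re_pos_of_forall_ofReal {E : Type*} [NormedAddCommGroup E] [NormedSpace ℂ E]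
    [CompleteSpace E] {f g : ℂ → E} (hf : DifferentiableOn ℂ f {z | 0 < z.re})
    (hg : DifferentiableOn ℂ g {z | 0 < z.re}) (h : ∀ x : ℝ, 0 < x → f x = g x) :
    Set.EqOn f g {z | 0 < z.re} := by
  have hopen : IsOpen {z : ℂ | 0 < z.re} := isOpen_lt continuous_const continuous_re
  refine (hf.analyticOnNhd hopen).eqOn_of_preconnected_of_frequently_eq (z₀ := 1)
    (hg.analyticOnNhd hopen) (convex_halfSpace_re_gt 0).isPreconnected (by simp) ?_
  have hofReal : Filter.Tendsto ofReal (nhdsWithin 1 {1}ᶜ) (nhdsWithin 1 {1}ᶜ) := by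
    simpa using continuous_ofReal.continuousWithinAt.tendsto_nhdsWithin
      (s := {1}ᶜ) (x := 1) (t := {1}ᶜ) fun x hx => by simpa using hx
  refine hofReal.frequently (Filter.Eventually.frequently ?_)
  filter_upwards [nhdsWithin_le_nhds (lt_mem_nhds one_pos)] using h

lemma hasMellin_cexp_neg_mul (hw : 0 < w.re) (hz : 0 < z.re) :
    HasMellin (fun t : ℝ => cexp (-(z * t))) w (Gamma w * z ^ (-w)) := by
  refine ⟨mellinConvergent_cexp_neg_mul hw hz, ?_⟩
  refine eqOn_re_pos_of_forall_ofReal (f := fun z => mellin (fun t : ℝ => cexp (-(z * t))) w)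
    (g := fun z => Gamma w * z ^ (-w)) (fun z hz => ?_) (fun z hz => ?_) (fun x hx => ?_) hz
  · exact (hasDerivAt_mellin_cexp_neg_mul hw hz).differentiableAt.differentiableWithinAt
  · exact ((differentiableAt_id.cpow_const (.inl hz)).const_mul _).differentiableWithinAt
  · simp only [mellin, smul_eq_mul]
    rw [integral_cpow_mul_exp_neg_mul_Ioi hw hx, one_div, inv_cpow, cpow_neg, mul_comm]
    exact arg_ofReal_of_nonneg hx.le ▸ Real.pi_pos.ne

end CexpMellin

lemma mellinConvergent_and_hasSum_mellin_of_hasSum_cexp {ι : Type*} [Countable ι] {a p : ι → ℂ}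
    {F : ℝ → ℂ} {w : ℂ} (hp : ∀ i, 0 < (p i).re) (hw : 0 < w.re)
    (hF : ∀ t : ℝ, 0 < t → HasSum (fun i => a i * cexp (-(p i * t))) (F t))
    (hsum : Summable fun i => ‖a i‖ * (p i).re ^ (-w.re)) :
    MellinConvergent F w ∧ HasSum (fun i => a i * (Gamma w * p i ^ (-w))) (mellin F w) := by
  have hterm (i) : HasMellin (fun t : ℝ => a i • cexp (-(p i * t))) w
      (a i • (Gamma w * p i ^ (-w))) :=
    hasMellin_const_smul_of_hasMellin (hasMellin_cexp_neg_mul hw (hp i)) (a i)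
  have hnorm : Summable fun i => ∫ t in Set.Ioi (0 : ℝ),
      ‖(t : ℂ) ^ (w - 1) • a i • cexp (-(p i * t))‖ := by
    simp only [smul_comm _ (a _), norm_smul (a _), integral_const_mul,
      integral_norm_cpow_smul_cexp_neg_mul hw (hp _)]
    exact (hsum.mul_left (Real.Gamma w.re)).congr fun i => by ring
  have hpointwise : ∀ᵐ t : ℝ ∂volume.restrict (Set.Ioi 0),
      HasSum (fun i => (t : ℂ) ^ (w - 1) • a i • cexp (-(p i * t))) ((t : ℂ) ^ (w - 1) • F t) := by
    filter_upwards [ae_restrict_mem measurableSet_Ioi] with t ht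
    exact (hF t ht).const_smul _
  refine ⟨integrable_of_hasSum_of_summable_integral_norm (fun i => (hterm i).1) hnorm hpointwise,
    ?_⟩
  have hmellin : ∫ t in Set.Ioi (0 : ℝ), ∑' i, (t : ℂ) ^ (w - 1) • a i • cexp (-(p i * t)) =
      mellin F w := integral_congr_ae (hpointwise.mono fun t ht => ht.tsum_eq)
  rw [← hmellin]
  exact (hasSum_integral_of_summable_integral_norm (fun i => (hterm i).1) hnorm).congr_fun
    fun i => (hterm i).2.symm

lemma summable_add_natCast_mul_rpow_neg {x ν p : ℝ} (hx : 0 < x) (hν : 0 < ν) (hp : 1 < p) :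
    Summable fun k : ℕ => (x + k * ν) ^ (-p) := by
  refine (((Real.summable_one_div_nat_add_rpow (x / ν) p).2 hp).mul_left (ν ^ (-p))).congr
    fun k => ?_
  rw [abs_of_pos (by positivity), one_div, ← Real.rpow_neg (by positivity),
    ← Real.mul_rpow (by positivity) (by positivity)]
  congr 1
  field_simp
  ring

section MultipleHurwitzZeta

variable {ι : Type*} [Fintype ι]

lemma summable_add_sum_natCast_mul_rpow_neg {ν : ι → ℝ} {x σ : ℝ} (hx : 0 < x)
    (hν : ∀ j, 0 < ν j) (hσ : Fintype.card ι < σ) :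
    Summable fun k : ι → ℕ => (x + ∑ j, k j * ν j) ^ (-σ) := by
  cases isEmpty_or_nonempty ι
  · exact .of_finite
  have hcard : (0 : ℝ) < Fintype.card ι := by exact_mod_cast Fintype.card_pos
  have hfactor (j) : Summable fun k : ℕ => (x + k * ν j) ^ (-(σ / Fintype.card ι)) :=
    summable_add_natCast_mul_rpow_neg hx (hν j) ((one_lt_div hcard).2 hσ)
  have hnonneg (k : ι → ℕ) (j) : 0 ≤ k j * ν j := mul_nonneg (k j).cast_nonneg (hν j).le
  have hbase (k : ι → ℕ) : 0 < x + ∑ j, k j * ν j :=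
    add_pos_of_pos_of_nonneg hx (sum_nonneg fun j _ => hnonneg k j)
  refine .of_nonneg_of_le (fun k => Real.rpow_nonneg (hbase k).le _) (fun k => ?_)
    (summable_norm_prod_pi fun j => (hfactor j).norm).of_norm
  -- Splitting the exponent evenly over the `card ι > 0` factors leaves each one above `1`.
  calc (x + ∑ j, k j * ν j) ^ (-σ)
      = ∏ _j : ι, (x + ∑ j, k j * ν j) ^ (-(σ / Fintype.card ι)) := by
        rw [prod_const, card_univ, ← Real.rpow_natCast, ← Real.rpow_mul (hbase k).le]
        congr 1
        field_simp
    _ ≤ ∏ j, (x + k j * ν j) ^ (-(σ / Fintype.card ι)) := by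
        refine prod_le_prod (fun _ _ => Real.rpow_nonneg (hbase k).le _) fun j _ => ?_
        refine Real.rpow_le_rpow_of_nonpos (add_pos_of_pos_of_nonneg hx (hnonneg k j)) ?_ ?_
        · gcongr
          exact single_le_sum (fun i _ => hnonneg k i) (mem_univ j)
        · have := hcard.trans hσ
          simp only [Left.neg_nonpos_iff]
          positivity

/-- The multiple Hurwitz zeta function `ζ_r(w, z, ω)` of order `r = card ι` with periods `ω`, in
terms of which absolute zeta functions are expressed. It is `0` where the series diverges. -/
noncomputable def multipleHurwitzZeta (ω : ι → ℂ) (w z : ℂ) : ℂ :=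
  ∑' k : ι → ℕ, (z + ∑ j, k j * ω j) ^ (-w)

/-- The generating function of the terms of `multipleHurwitzZeta ω`: its Mellin transform at `w` is
`Γ(w) ζ_r(w, z, ω)`. -/
noncomputable def multipleHurwitzKernel (ω : ι → ℂ) (z : ℂ) (t : ℝ) : ℂ :=
  cexp (-(z * t)) * ∏ j, (1 - cexp (-(ω j * t)))⁻¹

variable {ω : ι → ℂ} {w z : ℂ}

lemma hasSum_multipleHurwitzKernel (hω : ∀ j, 0 < (ω j).re) (z : ℂ) {t : ℝ} (ht : 0 < t) :
    HasSum (fun k : ι → ℕ => cexp (-((z + ∑ j, k j * ω j) * t))) (multipleHurwitzKernel ω z t) := by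
  have hlt (j) : ‖cexp (-(ω j * t))‖ < 1 := by
    simpa [Complex.norm_exp] using mul_pos (hω j) ht
  have hgeom := hasSum_prod_pi fun j => summable_norm_geometric_of_norm_lt_one (hlt j)
  simp only [tsum_geometric_of_norm_lt_one (hlt _)] at hgeom
  refine (hgeom.mul_left (cexp (-(z * t)))).congr_fun fun k => ?_
  simp only [← exp_nat_mul, ← exp_sum, ← exp_add, add_mul, neg_add, sum_mul, ← sum_neg_distrib,
    mul_neg, mul_assoc]

lemma mellinConvergent_and_hasSum_mellin_multipleHurwitzKernel (hω : ∀ j, 0 < (ω j).re)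
    (hw : Fintype.card ι < w.re) (hz : 0 < z.re) :
    MellinConvergent (multipleHurwitzKernel ω z) w ∧
      HasSum (fun k : ι → ℕ => Gamma w * (z + ∑ j, k j * ω j) ^ (-w))
        (mellin (multipleHurwitzKernel ω z) w) := by
  have hre (k : ι → ℕ) : (z + ∑ j, k j * ω j).re = z.re + ∑ j, k j * (ω j).re := by simp
  have hpos (k : ι → ℕ) : 0 < (z + ∑ j, k j * ω j).re := by
    rw [hre]
    exact add_pos_of_pos_of_nonneg hz
      (sum_nonneg fun j _ => mul_nonneg (k j).cast_nonneg (hω j).le)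
  have hsum : Summable fun k : ι → ℕ => (z + ∑ j, k j * ω j).re ^ (-w.re) := by
    simpa only [hre] using summable_add_sum_natCast_mul_rpow_neg hz hω hw
  simpa using mellinConvergent_and_hasSum_mellin_of_hasSum_cexp (a := 1) hpos
    ((Nat.cast_nonneg _).trans_lt hw)
    (by simpa using fun t ht => hasSum_multipleHurwitzKernel hω z ht) (by simpa using hsum)

lemma summable_multipleHurwitzZeta (hω : ∀ j, 0 < (ω j).re) (hw : Fintype.card ι < w.re)
    (hz : 0 < z.re) : Summable fun k : ι → ℕ => (z + ∑ j, k j * ω j) ^ (-w) := by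
  have hΓ : Gamma w ≠ 0 := Gamma_ne_zero_of_re_pos ((Nat.cast_nonneg _).trans_lt hw)
  exact (summable_mul_left_iff hΓ).1
    (mellinConvergent_and_hasSum_mellin_multipleHurwitzKernel hω hw hz).2.summable

lemma hasMellin_multipleHurwitzKernel (hω : ∀ j, 0 < (ω j).re) (hw : Fintype.card ι < w.re)
    (hz : 0 < z.re) :
    HasMellin (multipleHurwitzKernel ω z) w (Gamma w * multipleHurwitzZeta ω w z) := by
  have h := mellinConvergent_and_hasSum_mellin_multipleHurwitzKernel hω hw hz
  exact ⟨h.1, by rw [← h.2.tsum_eq, tsum_mul_left, multipleHurwitzZeta]⟩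

lemma inv_prod_cexp_sub_one (ω : ι → ℂ) (t : ℂ) :
    (∏ j, (cexp (ω j * t) - 1))⁻¹ =
      cexp (-((∑ j, ω j) * t)) * ∏ j, (1 - cexp (-(ω j * t)))⁻¹ := by
  rw [sum_mul, ← sum_neg_distrib, exp_sum, ← prod_mul_distrib, ← prod_inv_distrib]
  refine prod_congr rfl fun j _ => ?_
  rw [exp_neg, ← mul_inv, mul_sub, mul_one, mul_inv_cancel₀ (exp_ne_zero _)]

end MultipleHurwitzZeta

lemma prod_cexp_sub_one {κ : Type*} [Fintype κ] (μ : κ → ℂ) (t : ℂ) :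
    ∏ i, (cexp (μ i * t) - 1) =
      ∑ I : Finset κ, (-1) ^ (Fintype.card κ - #I) * cexp ((∑ i ∈ I, μ i) * t) := by
  classical
  simp only [sub_eq_add_neg, Fintype.prod_add, prod_const, card_compl, sum_mul, exp_sum]
  exact sum_congr rfl fun I _ => mul_comm _ _

section AbsoluteHurwitzZeta

variable {ι κ : Type*} [Fintype ι] [Fintype κ]

lemma cexp_ratio_eq_sum_multipleHurwitzKernel (α : ℂ) (μ : κ → ℂ) (ν : ι → ℂ) (s : ℂ) (t : ℝ) :
    cexp (α * t) * (∏ i, (cexp (μ i * t) - 1)) * (∏ j, (cexp (ν j * t) - 1))⁻¹ * cexp (-(s * t)) =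
      ∑ I : Finset κ, (-1) ^ (Fintype.card κ - #I) *
        multipleHurwitzKernel ν (s - α + ∑ j, ν j - ∑ i ∈ I, μ i) t := by
  rw [prod_cexp_sub_one, inv_prod_cexp_sub_one, mul_sum, sum_mul, sum_mul]
  refine sum_congr rfl fun I _ => ?_
  have hexponent : -((s - α + ∑ j, ν j - ∑ i ∈ I, μ i) * t) =
      α * t + (∑ i ∈ I, μ i) * t + -((∑ j, ν j) * t) + -(s * t) := by ring
  rw [multipleHurwitzKernel, hexponent, exp_add, exp_add, exp_add]
  ring

lemma re_sum_le_sum_posPart_re (μ : κ → ℂ) (I : Finset κ) :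
    (∑ i ∈ I, μ i).re ≤ ∑ i, (μ i).re⁺ := by
  rw [re_sum]
  exact (sum_le_sum fun i _ => le_posPart _).trans
    (sum_le_sum_of_subset_of_nonneg (subset_univ I) fun i _ _ => posPart_nonneg _)

theorem absolute_hurwitz_zeta_kurokawa_general (α : ℂ) (μ : κ → ℂ) (ν : ι → ℂ)
    (hν : ∀ j, 0 < (ν j).re) (w s : ℂ) (hw : Fintype.card ι < w.re)
    (hs : α.re + ∑ i, (μ i).re⁺ - ∑ j, (ν j).re < s.re) :
    IntegrableOn
      (fun t : ℝ => cexp (α * t) * (∏ i, (cexp (μ i * t) - 1)) * (∏ j, (cexp (ν j * t) - 1))⁻¹ *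
        cexp (-(s * t)) * (t : ℂ) ^ (w - 1))
      (Set.Ioi 0) ∧
    (∀ I : Finset κ, Summable fun k : ι → ℕ =>
      (s - α + ∑ j, ν j - ∑ i ∈ I, μ i + ∑ j, k j * ν j) ^ (-w)) ∧
    1 / Gamma w *
        ∫ t in Set.Ioi (0 : ℝ),
          cexp (α * t) * (∏ i, (cexp (μ i * t) - 1)) * (∏ j, (cexp (ν j * t) - 1))⁻¹ *
            cexp (-(s * t)) * (t : ℂ) ^ (w - 1) =
      ∑ I : Finset κ, (-1) ^ (Fintype.card κ - #I) *
        multipleHurwitzZeta ν w (s - α + ∑ j, ν j - ∑ i ∈ I, μ i) := by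
  have hre (I : Finset κ) : 0 < (s - α + ∑ j, ν j - ∑ i ∈ I, μ i).re := by
    have := re_sum_le_sum_posPart_re μ I
    simp only [sub_re, add_re, re_sum] at this ⊢
    linarith
  have hΓ : Gamma w ≠ 0 := Gamma_ne_zero_of_re_pos ((Nat.cast_nonneg _).trans_lt hw)
  have hmellin := hasMellin_finset_sum (s := univ) fun I _ =>
    hasMellin_const_smul_of_hasMellin (hasMellin_multipleHurwitzKernel hν hw (hre I))
      ((-1 : ℂ) ^ (Fintype.card κ - #I))
  simp only [HasMellin, MellinConvergent, mellin, smul_eq_mul,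
    ← cexp_ratio_eq_sum_multipleHurwitzKernel, mul_comm (_ ^ (w - 1))] at hmellin
  refine ⟨hmellin.1, fun I => summable_multipleHurwitzZeta hν hw (hre I), ?_⟩
  rw [hmellin.2, mul_sum]
  refine sum_congr rfl fun I _ => ?_
  field_simp

end AbsoluteHurwitzZeta

/-- **Kurokawa.** For `ℓ ∈ ℤ`, positive integers `a, b`, positive integers
`m(1), …, m(a)` and `n(1), …, n(b)`, let
`f(x) = x^{ℓ/2} ∏ᵢ (x^{m(i)} - 1) / ∏ⱼ (x^{n(j)} - 1)`.
Then for `w, s : ℂ` with `Re w > b` and `Re s > ℓ/2 + |m| - |n|`,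
`(1/Γ(w)) ∫₀^∞ f(e^t) e^{-st} t^{w-1} dt
  = Σ_{I ⊆ {1,…,a}} (-1)^{a-|I|} Σ_{k₁,…,k_b ≥ 0}
      (s - ℓ/2 + |n| - m(I) + Σⱼ kⱼ n(j))^{-w}`,
and the integral and all the multiple series converge absolutely. -/
theorem absolute_hurwitz_zeta_kurokawa (ℓ : ℤ) (a b : ℕ) (ha : 0 < a) (hb : 0 < b)
    (m : Fin a → ℕ) (n : Fin b → ℕ) (hm : ∀ i, 0 < m i) (hn : ∀ j, 0 < n j)
    (w s : ℂ) (hw : (b : ℝ) < w.re)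
    (hs : (ℓ : ℝ) / 2 + (∑ i, (m i : ℝ)) - (∑ j, (n j : ℝ)) < s.re) :
    IntegrableOn
      (fun t : ℝ =>
        Complex.exp ((ℓ : ℂ) / 2 * t) *
            (∏ i, (Complex.exp ((m i : ℂ) * t) - 1)) *
            (∏ j, (Complex.exp ((n j : ℂ) * t) - 1))⁻¹ *
          Complex.exp (-(s * t)) * (t : ℂ) ^ (w - 1))
      (Set.Ioi (0 : ℝ)) ∧
    (∀ I : Finset (Fin a),
      Summable (fun k : Fin b → ℕ =>
        (s - (ℓ : ℂ) / 2 + (∑ j, (n j : ℂ)) - (∑ i ∈ I, (m i : ℂ))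
            + ∑ j, (k j : ℂ) * (n j : ℂ)) ^ (-w))) ∧
    (1 / Complex.Gamma w) *
        ∫ t in Set.Ioi (0 : ℝ),
          Complex.exp ((ℓ : ℂ) / 2 * t) *
              (∏ i, (Complex.exp ((m i : ℂ) * t) - 1)) *
              (∏ j, (Complex.exp ((n j : ℂ) * t) - 1))⁻¹ *
            Complex.exp (-(s * t)) * (t : ℂ) ^ (w - 1)
      = ∑ I ∈ (Finset.univ : Finset (Fin a)).powerset,
          (-1 : ℂ) ^ (a - I.card) *
            ∑' k : Fin b → ℕ,
              (s - (ℓ : ℂ) / 2 + (∑ j, (n j : ℂ)) - (∑ i ∈ I, (m i : ℂ))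
                  + ∑ j, (k j : ℂ) * (n j : ℂ)) ^ (-w) := by
  simpa [multipleHurwitzZeta] using absolute_hurwitz_zeta_kurokawa_general ((ℓ : ℂ) / 2)
    (fun i => (m i : ℂ)) (fun j => (n j : ℂ)) (by simpa using hn) w s (by simpa using hw)
    (by simpa using hs)
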